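/- Let E, F ∈ GL_d(ℂ) with d > 2 satisfy FᵀEᵀEF = λI for some λ ∈ ℂ^×, and suppose the solutions q of q² − λ^{−1/2} tr(EᵀE⁻¹) q + 1 = 0 are generic (q = ±1 or not a root of unity), so that Mrozinski's quantum group G(E,F) is cosemisimple. Then GKdim G(E,F) = ∞. -/

import Mathlib

/-!
Background definitions: comodules over a Hopf algebra, simple comodules, direct
summands, supports, subcoalgebras, cosemisimplicity, Gelfand-Kirillov dimension,
and (measured) Grothendieck semirings of cosemisimple Hopf algebras.
-/

open TensorProduct

/-- The data of a coaction of a Hopf algebra `H` on a `k`-vector space `X`: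
a linear map `ρ : X → X ⊗ H`.  The comodule axioms are recorded separately in
`Comod.IsComodule`. -/
structure Comod (k : Type) [Field k] (H : Type) [Ring H] [HopfAlgebra k H] : Type 1 where
  X : Type
  [addCommGroup : AddCommGroup X]
  [module : Module k X]
  ρ : X →ₗ[k] X ⊗[k] H

attribute [instance] Comod.addCommGroup Comod.module

namespace Comod

variable {k : Type} [Field k] {H : Type} [Ring H] [HopfAlgebra k H]

/-- The trivial `H`-comodule `𝟏`, i.e. `k` with coaction `x ↦ x ⊗ 1`. -/
noncomputable def unit (k : Type) [Field k] (H : Type) [Ring H] [HopfAlgebra k H] :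
    Comod k H where
  X := k
  ρ := (TensorProduct.mk k k H).flip 1

/-- The regular comodule: `H` coacting on itself by comultiplication. -/
noncomputable def regular (k : Type) [Field k] (H : Type) [Ring H] [HopfAlgebra k H] :
    Comod k H where
  X := H
  ρ := Coalgebra.comul

/-- Tensor product of comodules: the coaction on `M ⊗ N` is
`(id ⊗ id ⊗ μ_H) ∘ (id ⊗ τ ⊗ id) ∘ (ρ_M ⊗ ρ_N)`. -/
noncomputable def tensor (M N : Comod k H) : Comod k H where
  X := M.X ⊗[k] N.X
  ρ := (LinearMap.mul' k H).lTensor (M.X ⊗[k] N.X)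
        ∘ₗ (TensorProduct.tensorTensorTensorComm k M.X H N.X H).toLinearMap
        ∘ₗ TensorProduct.map M.ρ N.ρ

/-- Binary direct sum of comodules. -/
noncomputable def dsum (M N : Comod k H) : Comod k H where
  X := M.X × N.X
  ρ := (LinearMap.inl k M.X N.X).rTensor H ∘ₗ M.ρ ∘ₗ LinearMap.fst k M.X N.X
     + (LinearMap.inr k M.X N.X).rTensor H ∘ₗ N.ρ ∘ₗ LinearMap.snd k M.X N.X

/-- Finite direct sum of a family of comodules. -/
noncomputable def pi {ι : Type} [Fintype ι] (S : ι → Comod k H) : Comod k H where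
  X := ∀ i, (S i).X
  ρ := letI := Classical.decEq ι
    ∑ i : ι, (LinearMap.single k (fun j => (S j).X) i).rTensor H ∘ₗ (S i).ρ
        ∘ₗ LinearMap.proj i

/-- `n`-th tensor power of a comodule (`M^{⊗0} = 𝟏`, `M^{⊗1} = M`). -/
noncomputable def tpow (M : Comod k H) : ℕ → Comod k H
  | 0 => unit k H
  | 1 => M
  | n + 2 => (M.tpow (n + 1)).tensor M

/-- A linear map is a map of comodules if it intertwines the coactions. -/
def IsHom (M N : Comod k H) (f : M.X →ₗ[k] N.X) : Prop :=
  N.ρ ∘ₗ f = f.rTensor H ∘ₗ M.ρ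

/-- Isomorphism of comodules. -/
def Iso (M N : Comod k H) : Prop :=
  ∃ e : M.X ≃ₗ[k] N.X, IsHom M N e.toLinearMap

/-- The comodule axioms (coassociativity and counitality) for a coaction. -/
def IsComodule (M : Comod k H) : Prop :=
  (M.ρ.rTensor H ∘ₗ M.ρ =
      (TensorProduct.assoc k M.X H H).symm.toLinearMap
        ∘ₗ (Coalgebra.comul (R := k) (A := H)).lTensor M.X ∘ₗ M.ρ) ∧
  (TensorProduct.rid k M.X).toLinearMap
      ∘ₗ (Coalgebra.counit (R := k) (A := H)).lTensor M.X ∘ₗ M.ρ = LinearMap.id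

/-- A subspace `N ⊆ M` is a subcomodule if the coaction restricts to `N ⊗ H`. -/
def IsSubcomodule (M : Comod k H) (N : Submodule k M.X) : Prop :=
  ∀ x ∈ N, M.ρ x ∈ LinearMap.range (N.subtype.rTensor H)

/-- Simple (hence finite-dimensional) comodules. -/
def IsSimple (M : Comod k H) : Prop :=
  M.IsComodule ∧ Nontrivial M.X ∧ FiniteDimensional k M.X ∧
    ∀ N : Submodule k M.X, M.IsSubcomodule N → N = ⊥ ∨ N = ⊤

/-- `S` is a direct summand of `M` (as comodules): the inclusion splits. -/
def DirectSummand (S M : Comod k H) : Prop :=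
  ∃ (i : S.X →ₗ[k] M.X) (p : M.X →ₗ[k] S.X),
    IsHom S M i ∧ IsHom M S p ∧ p ∘ₗ i = LinearMap.id

/-- `C` is the support of the comodule `M`: the (unique) minimal subspace
`C ⊆ H` with `ρ(M) ⊆ M ⊗ C`. -/
def IsSupport (M : Comod k H) (C : Submodule k H) : Prop :=
  (∀ x : M.X, M.ρ x ∈ LinearMap.range (C.subtype.lTensor M.X)) ∧
    ∀ C' : Submodule k H,
      (∀ x : M.X, M.ρ x ∈ LinearMap.range (C'.subtype.lTensor M.X)) → C ≤ C'

end Comod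

/-- A subspace `C ⊆ H` is a subcoalgebra if `Δ(C) ⊆ C ⊗ C`. -/
def IsSubcoalgebra (k : Type) [Field k] (H : Type) [Ring H] [HopfAlgebra k H]
    (C : Submodule k H) : Prop :=
  ∀ x ∈ C, Coalgebra.comul (R := k) x ∈
    LinearMap.range (TensorProduct.map C.subtype C.subtype)

/-- A simple subcoalgebra: a nonzero subcoalgebra with no proper nonzero
subcoalgebras. -/
def IsSimpleSubcoalgebra (k : Type) [Field k] (H : Type) [Ring H] [HopfAlgebra k H]
    (C : Submodule k H) : Prop :=
  IsSubcoalgebra k H C ∧ C ≠ ⊥ ∧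
    ∀ D : Submodule k H, D ≤ C → IsSubcoalgebra k H D → D = ⊥ ∨ D = C

/-- A Hopf algebra is cosemisimple if every subcomodule of every comodule is a
direct summand. -/
def IsCosemisimple (k : Type) [Field k] (H : Type) [Ring H] [HopfAlgebra k H] : Prop :=
  ∀ M : Comod k H, M.IsComodule →
    ∀ N : Submodule k M.X, M.IsSubcomodule N →
      ∃ N' : Submodule k M.X, M.IsSubcomodule N' ∧ IsCompl N N'

open scoped ENNReal in
/-- The Gelfand-Kirillov dimension of a `k`-algebra `A`:
`sup_V limsup_n log(dim V^n)/log n` over finite-dimensional subspaces `V ⊆ A`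
(for a finitely generated algebra this agrees with the value computed from any
finite-dimensional generating subspace containing `1`). -/
noncomputable def GKdim (k : Type) (A : Type) [Field k] [Ring A] [Algebra k A] : ℝ≥0∞ :=
  ⨆ (V : Submodule k A) (_ : FiniteDimensional k V),
    Filter.limsup
      (fun n : ℕ => ENNReal.ofReal
        (Real.log (Module.finrank k ↥(V ^ n)) / Real.log n)) Filter.atTop

/-- The (measured) Grothendieck semiring of a cosemisimple Hopf algebra `H`:
a commutative semiring `R` together with a class map `cls` on finite-dimensional
`H`-comodules which is constant on isomorphism classes, additive on direct sums,
multiplicative on tensor products, sends `𝟏` to `1`, and induces a bijection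
between iso-classes of finite-dimensional comodules and elements of `R`.
The dimension function `d_H` on `R_+(H)` is recovered as `cls M ↦ dim_k M`. -/
structure GrSemiring (k : Type) [Field k] (H : Type) [Ring H] [HopfAlgebra k H] :
    Type 1 where
  R : Type
  [commSemiring : CommSemiring R]
  cls : Comod k H → R
  cls_one : cls (Comod.unit k H) = 1
  cls_iso : ∀ M N : Comod k H, M.IsComodule → N.IsComodule →
    FiniteDimensional k M.X → FiniteDimensional k N.X → Comod.Iso M N → cls M = cls N
  cls_dsum : ∀ M N : Comod k H, M.IsComodule → N.IsComodule →
    FiniteDimensional k M.X → FiniteDimensional k N.X →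
      cls (M.dsum N) = cls M + cls N
  cls_tensor : ∀ M N : Comod k H, M.IsComodule → N.IsComodule →
    FiniteDimensional k M.X → FiniteDimensional k N.X →
      cls (M.tensor N) = cls M * cls N
  cls_surj : ∀ r : R, ∃ M : Comod k H, M.IsComodule ∧ FiniteDimensional k M.X ∧ cls M = r
  cls_inj : ∀ M N : Comod k H, M.IsComodule → N.IsComodule →
    FiniteDimensional k M.X → FiniteDimensional k N.X → cls M = cls N → Comod.Iso M N

attribute [instance] GrSemiring.commSemiring

/-!
A nonzero matrix coefficient map of a simple comodule is an injective comodule map into the regular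
comodule, so the dimension of a simple comodule is at most that of any subspace containing its
coefficients. If `V` contains the coefficients of the fundamental comodule `S 1 0`, the fusion
rules make `S n 0` a quotient of its `n`-th tensor power, so the coefficients of `S n 0` lie in
`V ^ n`. The dimensions of the `S n m` do not depend on `m`, since the `S 0 m` are invertible and
hence one-dimensional; they therefore obey `d * a (n + 1) = a (n + 2) + a n`, which for `d > 2`
forces `2 ^ n ≤ a n ≤ dim (V ^ n)`, and `log (2 ^ n) / log n` is unbounded.
-/

section SliceMap

variable {R X A B : Type*} [CommSemiring R] [AddCommMonoid X] [Module R X]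
  [AddCommMonoid A] [Module R A] [AddCommMonoid B] [Module R B]

variable (A) in
/-- The left slice map `φ ⊗ id : X ⊗ A → A` of a linear functional `φ` on `X`, with `R ⊗ A`
identified with `A`. It turns coactions into matrix coefficients. -/
noncomputable def sliceMap (φ : Module.Dual R X) : X ⊗[R] A →ₗ[R] A :=
  (TensorProduct.lid R A).toLinearMap ∘ₗ φ.rTensor A

@[simp]
theorem sliceMap_tmul (φ : Module.Dual R X) (x : X) (a : A) :
    sliceMap A φ (x ⊗ₜ a) = φ x • a := by
  simp [sliceMap]

theorem comp_sliceMap (f : A →ₗ[R] B) (φ : Module.Dual R X) :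
    f ∘ₗ sliceMap A φ = sliceMap B φ ∘ₗ f.lTensor X := by
  ext; simp

theorem sliceMap_self (φ : Module.Dual R X) :
    sliceMap R φ = φ ∘ₗ (TensorProduct.rid R X).toLinearMap := by
  ext; simp

theorem rTensor_sliceMap_comp_assoc_symm (φ : Module.Dual R X) :
    (sliceMap A φ).rTensor B ∘ₗ (TensorProduct.assoc R X A B).symm.toLinearMap =
      sliceMap (A ⊗[R] B) φ := by
  ext; simp [TensorProduct.smul_tmul']

theorem sliceMap_mem_of_mem_range_lTensor (φ : Module.Dual R X) {C : Submodule R A}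
    {t : X ⊗[R] A} (ht : t ∈ LinearMap.range (C.subtype.lTensor X)) : sliceMap A φ t ∈ C := by
  obtain ⟨s, rfl⟩ := ht
  rw [← LinearMap.comp_apply, ← comp_sliceMap]
  exact (sliceMap C φ s).2

end SliceMap

namespace Comod

variable {k : Type} [Field k] {H : Type} [Ring H] [HopfAlgebra k H] {M N P Q : Comod k H}

theorem IsHom.comp {f : M.X →ₗ[k] N.X} {g : N.X →ₗ[k] P.X} (hg : IsHom N P g)
    (hf : IsHom M N f) : IsHom M P (g ∘ₗ f) := by
  unfold IsHom at *
  rw [← LinearMap.comp_assoc, hg, LinearMap.comp_assoc, hf, LinearMap.rTensor_comp,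
    LinearMap.comp_assoc]

theorem IsHom.isSubcomodule_ker {f : M.X →ₗ[k] N.X} (hf : IsHom M N f) :
    M.IsSubcomodule (LinearMap.ker f) := by
  intro x hx
  have hexact := Module.Flat.rTensor_exact H (LinearMap.exact_subtype_ker_map f)
  refine (hexact _).1 ?_
  rw [← LinearMap.comp_apply, ← hf, LinearMap.comp_apply, LinearMap.mem_ker.1 hx, map_zero]

theorem IsSimple.injective_of_isHom (hM : M.IsSimple) {f : M.X →ₗ[k] N.X} (hf : IsHom M N f)
    (hf0 : f ≠ 0) : Function.Injective f := by
  obtain ⟨-, -, -, hsub⟩ := hM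
  refine LinearMap.ker_eq_bot.1 ((hsub _ hf.isSubcomodule_ker).resolve_right ?_)
  rwa [LinearMap.ker_eq_top]

theorem Iso.trans (hMN : Iso M N) (hNP : Iso N P) : Iso M P := by
  obtain ⟨e, he⟩ := hMN
  obtain ⟨e', he'⟩ := hNP
  exact ⟨e.trans e', he'.comp he⟩

theorem Iso.finrank_eq (h : Iso M N) : Module.finrank k M.X = Module.finrank k N.X := by
  obtain ⟨e, -⟩ := h
  exact e.finrank_eq

theorem finrank_tensor (M N : Comod k H) :
    Module.finrank k (M.tensor N).X = Module.finrank k M.X * Module.finrank k N.X :=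
  Module.finrank_tensorProduct

theorem finrank_dsum (M N : Comod k H) [FiniteDimensional k M.X] [FiniteDimensional k N.X] :
    Module.finrank k (M.dsum N).X = Module.finrank k M.X + Module.finrank k N.X :=
  Module.finrank_prod

theorem Iso.finrank_mul_finrank_eq_add [FiniteDimensional k P.X] [FiniteDimensional k Q.X]
    (h : Iso (M.tensor N) (P.dsum Q)) :
    Module.finrank k M.X * Module.finrank k N.X =
      Module.finrank k P.X + Module.finrank k Q.X := by
  rw [← finrank_tensor, h.finrank_eq, finrank_dsum]

theorem finrank_eq_one_of_tensor_iso_unit (h : Iso (M.tensor N) (unit k H)) :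
    Module.finrank k M.X = 1 := by
  refine Nat.eq_one_of_mul_eq_one_right (n := Module.finrank k N.X) ?_
  rw [← finrank_tensor, h.finrank_eq]
  exact Module.finrank_self k

theorem isHom_fst (M N : Comod k H) : IsHom (M.dsum N) M (LinearMap.fst k M.X N.X) := by
  change M.ρ ∘ₗ LinearMap.fst k M.X N.X = (LinearMap.fst k M.X N.X).rTensor H ∘ₗ
    ((LinearMap.inl k M.X N.X).rTensor H ∘ₗ M.ρ ∘ₗ LinearMap.fst k M.X N.X +
      (LinearMap.inr k M.X N.X).rTensor H ∘ₗ N.ρ ∘ₗ LinearMap.snd k M.X N.X)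
  simp only [LinearMap.comp_add, ← LinearMap.comp_assoc, ← LinearMap.rTensor_comp,
    LinearMap.fst_comp_inl, LinearMap.fst_comp_inr, LinearMap.rTensor_id,
    LinearMap.rTensor_zero, LinearMap.id_comp, LinearMap.zero_comp, add_zero]

/-- The matrix coefficients `x ↦ φ(x₍₀₎) x₍₁₎` of `M` along a linear functional `φ`. -/
noncomputable def matrixCoeff (M : Comod k H) (φ : Module.Dual k M.X) : M.X →ₗ[k] H :=
  sliceMap H φ ∘ₗ M.ρ

theorem IsComodule.counit_comp_matrixCoeff (hM : M.IsComodule) (φ : Module.Dual k M.X) :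
    Coalgebra.counit ∘ₗ M.matrixCoeff φ = φ := by
  rw [matrixCoeff, ← LinearMap.comp_assoc, comp_sliceMap, sliceMap_self, LinearMap.comp_assoc,
    LinearMap.comp_assoc, hM.2, LinearMap.comp_id]

theorem IsComodule.isHom_matrixCoeff (hM : M.IsComodule) (φ : Module.Dual k M.X) :
    IsHom M (regular k H) (M.matrixCoeff φ) :=
  calc Coalgebra.comul ∘ₗ sliceMap H φ ∘ₗ M.ρ
    _ = sliceMap (H ⊗[k] H) φ ∘ₗ Coalgebra.comul.lTensor M.X ∘ₗ M.ρ := by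
        rw [← LinearMap.comp_assoc, comp_sliceMap, LinearMap.comp_assoc]
    _ = (sliceMap H φ).rTensor H ∘ₗ M.ρ.rTensor H ∘ₗ M.ρ := by
        rw [← rTensor_sliceMap_comp_assoc_symm, hM.1, LinearMap.comp_assoc]
    _ = (M.matrixCoeff φ).rTensor H ∘ₗ M.ρ := by
        rw [matrixCoeff, LinearMap.rTensor_comp, LinearMap.comp_assoc]

/-- All matrix coefficients of `M` lie in the subspace `C` of `H`, i.e. `ρ(M) ⊆ M ⊗ C`. -/
def CoeffIn (M : Comod k H) (C : Submodule k H) : Prop :=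
  LinearMap.range M.ρ ≤ LinearMap.range (C.subtype.lTensor M.X)

variable {C D : Submodule k H}

theorem exists_coeffIn (M : Comod k H) [FiniteDimensional k M.X] :
    ∃ C : Submodule k H, FiniteDimensional k C ∧ M.CoeffIn C := by
  obtain ⟨s, hs⟩ : (LinearMap.range M.ρ).FG := Module.Finite.iff_fg.1 inferInstance
  obtain ⟨C, hC, hsC⟩ :=
    TensorProduct.exists_finite_submodule_right_of_setFinite (s : Set (M.X ⊗[k] H)) s.finite_toSet
  exact ⟨C, hC, hs.symm.trans_le (Submodule.span_le.2 hsC)⟩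

theorem CoeffIn.matrixCoeff_mem (hM : M.CoeffIn C) (φ : Module.Dual k M.X) (x : M.X) :
    M.matrixCoeff φ x ∈ C :=
  sliceMap_mem_of_mem_range_lTensor φ (hM ⟨x, rfl⟩)

theorem CoeffIn.of_surjective (hM : M.CoeffIn C) {f : M.X →ₗ[k] N.X} (hf : IsHom M N f)
    (hsurj : Function.Surjective f) : N.CoeffIn C :=
  calc LinearMap.range N.ρ
    _ = LinearMap.range (f.rTensor H ∘ₗ M.ρ) := by
        rw [← hf, LinearMap.range_comp_of_range_eq_top _ (LinearMap.range_eq_top.2 hsurj)]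
    _ ≤ LinearMap.range (f.rTensor H ∘ₗ C.subtype.lTensor M.X) := by
        rw [LinearMap.range_comp, LinearMap.range_comp]
        exact Submodule.map_mono hM
    _ = LinearMap.range (C.subtype.lTensor N.X ∘ₗ f.rTensor C) := by
        rw [LinearMap.rTensor_comp_lTensor, LinearMap.lTensor_comp_rTensor]
    _ ≤ LinearMap.range (C.subtype.lTensor N.X) := LinearMap.range_comp_le_range _ _

theorem CoeffIn.tensor (hM : M.CoeffIn C) (hN : N.CoeffIn D) :
    (M.tensor N).CoeffIn (C * D) := by
  let mulCoeff : (M.X ⊗[k] H) ⊗[k] (N.X ⊗[k] H) →ₗ[k] (M.X ⊗[k] N.X) ⊗[k] H :=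
    (LinearMap.mul' k H).lTensor (M.X ⊗[k] N.X) ∘ₗ
      (TensorProduct.tensorTensorTensorComm k M.X H N.X H).toLinearMap
  have mulCoeff_comp : mulCoeff ∘ₗ
        TensorProduct.map (C.subtype.lTensor M.X) (D.subtype.lTensor N.X) =
      (C * D).subtype.lTensor (M.X ⊗[k] N.X) ∘ₗ (C.mulMap' D).lTensor (M.X ⊗[k] N.X) ∘ₗ
        (TensorProduct.tensorTensorTensorComm k M.X C N.X D).toLinearMap := by
    ext; simp [mulCoeff]
  calc LinearMap.range (mulCoeff ∘ₗ TensorProduct.map M.ρ N.ρ)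
    _ = (LinearMap.range (TensorProduct.map M.ρ N.ρ)).map mulCoeff := LinearMap.range_comp _ _
    _ ≤ (LinearMap.range (TensorProduct.map (C.subtype.lTensor M.X)
          (D.subtype.lTensor N.X))).map mulCoeff :=
        Submodule.map_mono (TensorProduct.range_map_mono hM hN)
    _ ≤ LinearMap.range ((C * D).subtype.lTensor (M.X ⊗[k] N.X)) := by
        rw [← LinearMap.range_comp, mulCoeff_comp]
        exact LinearMap.range_comp_le_range _ _

theorem CoeffIn.of_tensor_iso_dsum (hM : M.CoeffIn C) (hN : N.CoeffIn D)
    (h : Iso (M.tensor N) (P.dsum Q)) : P.CoeffIn (C * D) := by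
  obtain ⟨e, he⟩ := h
  exact ((hM.tensor hN).of_surjective he e.surjective).of_surjective (isHom_fst P Q)
    LinearMap.fst_surjective

theorem CoeffIn.pow_of_tensor_iso_dsum {S T : ℕ → Comod k H}
    (h : ∀ n, Iso ((S 0).tensor (S n)) ((S (n + 1)).dsum (T n))) (h0 : (S 0).CoeffIn C) (n : ℕ) :
    (S n).CoeffIn (C ^ (n + 1)) := by
  induction n with
  | zero => rwa [zero_add, pow_one]
  | succ n ih =>
    rw [pow_succ']
    exact h0.of_tensor_iso_dsum ih (h n)

theorem IsSimple.finrank_le_of_coeffIn (hM : M.IsSimple) [FiniteDimensional k C]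
    (hC : M.CoeffIn C) : Module.finrank k M.X ≤ Module.finrank k C := by
  have hcomod : M.IsComodule := hM.1
  have : Nontrivial M.X := hM.2.1
  obtain ⟨φ, hφ⟩ := exists_ne (0 : Module.Dual k M.X)
  have hne : M.matrixCoeff φ ≠ 0 := by
    intro h
    rw [← hcomod.counit_comp_matrixCoeff φ, h, LinearMap.comp_zero] at hφ
    exact hφ rfl
  have hinj : Function.Injective (M.matrixCoeff φ) :=
    hM.injective_of_isHom (hcomod.isHom_matrixCoeff φ) hne
  exact LinearMap.finrank_le_finrank_of_injective
    (f := (M.matrixCoeff φ).codRestrict C (hC.matrixCoeff_mem φ))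
    (LinearMap.injective_codRestrict_iff _ |>.2 hinj)

end Comod

theorem apply_eq_apply_of_recurrence {R ι : Type*} [Mul R] [Add R] [IsRightCancelAdd R] {c : R}
    {s : ι → ι} {a : ℕ → ι → R} (h0 : ∀ i j, a 0 i = a 0 j) (h1 : ∀ i j, a 1 i = a 1 j)
    (hrec : ∀ n i, c * a (n + 1) i = a (n + 2) i + a n (s i)) (n : ℕ) (i j : ι) :
    a n i = a n j := by
  induction n using Nat.twoStepInduction generalizing i j with
  | zero => exact h0 i j
  | one => exact h1 i j
  | more n ih ih' =>
    refine add_right_cancel (b := a n (s i)) ?_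
    rw [← hrec, ih' i j, hrec, ih (s i) (s j)]

theorem mul_le_succ_of_recurrence {c : ℕ} (hc : 1 ≤ c) {a : ℕ → ℕ} (h01 : c * a 0 ≤ a 1)
    (hrec : ∀ n, (c + 1) * a (n + 1) ≤ a (n + 2) + a n) (n : ℕ) : c * a n ≤ a (n + 1) := by
  induction n with
  | zero => exact h01
  | succ n ih =>
    have hmono : a n ≤ a (n + 1) := (Nat.le_mul_of_pos_left _ hc).trans ih
    have hstep : c * a (n + 1) + a (n + 1) ≤ a (n + 1 + 1) + a n := add_one_mul c _ ▸ hrec n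
    omega

section GrowthRate

open Filter

theorem tendsto_div_log_atTop : Tendsto (fun x : ℝ => x / Real.log x) atTop atTop := by
  have hlog : Tendsto (fun x : ℝ => Real.log x / x) atTop (nhdsWithin 0 (Set.Ioi 0)) := by
    refine tendsto_nhdsWithin_iff.2 ⟨Real.isLittleO_log_id_atTop.tendsto_div_nhds_zero, ?_⟩
    filter_upwards [eventually_gt_atTop (1 : ℝ)] with x hx
    exact div_pos (Real.log_pos hx) (by linarith)
  exact hlog.inv_tendsto_nhdsGT_zero.congr fun x => inv_div _ _

theorem tendsto_log_div_log_of_pow_le {c : ℝ} (hc : 1 < c) {u : ℕ → ℝ}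
    (hu : ∀ᶠ n in atTop, c ^ n ≤ u n) :
    Tendsto (fun n : ℕ => Real.log (u n) / Real.log n) atTop atTop := by
  have hlin : Tendsto (fun n : ℕ => Real.log c * ((n : ℝ) / Real.log n)) atTop atTop :=
    (tendsto_div_log_atTop.comp tendsto_natCast_atTop_atTop).const_mul_atTop (Real.log_pos hc)
  refine tendsto_atTop_mono' _ ?_ hlin
  filter_upwards [hu] with n hn
  calc Real.log c * ((n : ℝ) / Real.log n)
    _ = Real.log (c ^ n) / Real.log n := by rw [Real.log_pow]; ring
    _ ≤ Real.log (u n) / Real.log n :=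
        div_le_div_of_nonneg_right (Real.log_le_log (by positivity) hn) (Real.log_natCast_nonneg n)

theorem GKdim_eq_top_of_pow_le_finrank {k A : Type} [Field k] [Ring A] [Algebra k A]
    (V : Submodule k A) [hV : FiniteDimensional k V] {c : ℝ} (hc : 1 < c)
    (h : ∀ᶠ n in atTop, c ^ n ≤ Module.finrank k ↥(V ^ n)) : GKdim k A = ⊤ := by
  have hlim := ENNReal.tendsto_ofReal_nhds_top.2 (tendsto_log_div_log_of_pow_le hc h)
  rw [eq_top_iff, ← hlim.limsup_eq]
  exact le_iSup₂_of_le V hV le_rfl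

end GrowthRate

section GLTwoFusion

variable {k : Type} [Field k] {H : Type} [Ring H] [HopfAlgebra k H] {S : ℕ → ℤ → Comod k H}
  [∀ n m, FiniteDimensional k (S n m).X]

theorem finrank_eq_finrank_of_fusion (hone : ∀ m, Module.finrank k (S 0 m).X = 1)
    (hfus0 : ∀ m, Comod.Iso ((S 1 0).tensor (S 0 m)) (S 1 m))
    (hfus : ∀ n m, Comod.Iso ((S 1 0).tensor (S (n + 1) m)) ((S (n + 2) m).dsum (S n (m + 1))))
    (n : ℕ) (m m' : ℤ) : Module.finrank k (S n m).X = Module.finrank k (S n m').X := by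
  have hS1 (m : ℤ) : Module.finrank k (S 1 m).X = Module.finrank k (S 1 0).X := by
    rw [← (hfus0 m).finrank_eq, Comod.finrank_tensor, hone, mul_one]
  exact apply_eq_apply_of_recurrence (a := fun n m => Module.finrank k (S n m).X)
    (fun m m' => (hone m).trans (hone m').symm) (fun m m' => (hS1 m).trans (hS1 m').symm)
    (fun n m => (hfus n m).finrank_mul_finrank_eq_add) n m m'

theorem pow_le_finrank_of_fusion (hone : ∀ m, Module.finrank k (S 0 m).X = 1)
    (hfus0 : ∀ m, Comod.Iso ((S 1 0).tensor (S 0 m)) (S 1 m))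
    (hfus : ∀ n m, Comod.Iso ((S 1 0).tensor (S (n + 1) m)) ((S (n + 2) m).dsum (S n (m + 1))))
    {c : ℕ} (hc : 1 ≤ c) (hfund : c + 1 ≤ Module.finrank k (S 1 0).X) (n : ℕ) :
    c ^ n ≤ Module.finrank k (S n 0).X := by
  have hrec (n : ℕ) : (c + 1) * Module.finrank k (S (n + 1) 0).X ≤
      Module.finrank k (S (n + 2) 0).X + Module.finrank k (S n 0).X := by
    rw [finrank_eq_finrank_of_fusion hone hfus0 hfus n 0 (0 + 1),
      ← (hfus n 0).finrank_mul_finrank_eq_add]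
    exact Nat.mul_le_mul_right _ hfund
  have h01 : c * Module.finrank k (S 0 0).X ≤ Module.finrank k (S 1 0).X := by
    rw [hone, mul_one]
    exact (Nat.le_succ c).trans hfund
  have hratio (n : ℕ) : c * Module.finrank k (S n 0).X ≤ Module.finrank k (S (n + 1) 0).X :=
    mul_le_succ_of_recurrence (a := fun n => Module.finrank k (S n 0).X) hc h01 hrec n
  have hgeom := geom_le (u := fun n => (Module.finrank k (S n 0).X : ℝ)) c.cast_nonneg n
    fun n _ => mod_cast hratio n
  rw [hone, Nat.cast_one, mul_one] at hgeom
  exact_mod_cast hgeom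

end GLTwoFusion

theorem stmt12_general {k : Type} [Field k] {H : Type} [Ring H] [HopfAlgebra k H]
    (S : ℕ → ℤ → Comod k H)
    (hsimple : ∀ n m, (S n m).IsSimple)
    (hunit : Comod.Iso (S 0 0) (Comod.unit k H))
    (hdet : ∀ m m', Comod.Iso ((S 0 m).tensor (S 0 m')) (S 0 (m + m')))
    (hfus0 : ∀ m, Comod.Iso ((S 1 0).tensor (S 0 m)) (S 1 m))
    (hfus : ∀ n m, Comod.Iso ((S 1 0).tensor (S (n + 1) m))
        ((S (n + 2) m).dsum (S n (m + 1))))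
    (hfund : 2 < Module.finrank k (S 1 0).X) :
    GKdim k H = ⊤ := by
  have hfin (n m) : FiniteDimensional k (S n m).X := (hsimple n m).2.2.1
  have hone (m : ℤ) : Module.finrank k (S 0 m).X = 1 :=
    Comod.finrank_eq_one_of_tensor_iso_unit ((hdet m (-m)).trans (by rwa [add_neg_cancel]))
  obtain ⟨V, hV, hVcoeff⟩ := Comod.exists_coeffIn (S 1 0)
  refine GKdim_eq_top_of_pow_le_finrank V one_lt_two ?_
  filter_upwards [Filter.eventually_ge_atTop 1] with n hn
  obtain ⟨n, rfl⟩ := Nat.exists_eq_add_of_le' hn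
  have hcoeff : (S (n + 1) 0).CoeffIn (V ^ (n + 1)) :=
    Comod.CoeffIn.pow_of_tensor_iso_dsum (S := fun n => S (n + 1) 0) (fun n => hfus n 0) hVcoeff n
  have : FiniteDimensional k ↥(V ^ (n + 1)) :=
    Module.Finite.iff_fg.2 ((Module.Finite.iff_fg.1 hV).pow _)
  exact_mod_cast (pow_le_finrank_of_fusion hone hfus0 hfus one_le_two hfund (n + 1)).trans
    ((hsimple (n + 1) 0).finrank_le_of_coeffIn hcoeff)

/-- Example 3.10 of the paper, case `d > 2`.  Let
`E, F ∈ GL_d(ℂ)` with `d > 2` satisfy `FᵀEᵀEF = λ·I` for some `λ ∈ ℂ^×`, and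
suppose the solutions `q` of `q² − λ^{-1/2} tr(EᵀE⁻¹) q + 1 = 0` are generic
(`q = ±1` or not a root of unity).  Let `B = G(E,F)` be Mrozinski's quantum
group: a finitely generated cosemisimple Hopf algebra whose comodule theory is
that of `O_q(GL(2))` — its simple comodules are `S_{n,m}` (`n ∈ ℕ`, `m ∈ ℤ`,
every simple comodule isomorphic to exactly one of them) with `S_{0,0} = 𝟏`,
`S_{0,m} ⊗ S_{0,m'} ≅ S_{0,m+m'}`, `S_{1,0} ⊗ S_{0,m} ≅ S_{1,m}`,
`S_{1,0} ⊗ S_{n+1,m} ≅ S_{n+2,m} ⊕ S_{n,m+1}`, and the fundamental comodule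
`S_{1,0}` is `d`-dimensional (so the semiring isomorphism
`R_+(G(E,F)) ≅ R_+(O_q(GL(2)))` sends its class to a `2`-dimensional class).
Then `GKdim G(E,F) = ∞`. -/
theorem stmt12 (d : ℕ) (hd : 2 < d)
    (E F : Matrix (Fin d) (Fin d) ℂ) (hE : IsUnit E) (hF : IsUnit F)
    (l : ℂ) (hl : l ≠ 0)
    (hEF : F.transpose * E.transpose * E * F = l • (1 : Matrix (Fin d) (Fin d) ℂ))
    (q : ℂ)
    (hq : ∃ μ : ℂ, μ ^ 2 * l = 1 ∧
      q ^ 2 - μ * (E.transpose * E⁻¹).trace * q + 1 = 0)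
    (hgen : q = 1 ∨ q = -1 ∨ ∀ n : ℕ, 0 < n → q ^ n ≠ 1)
    (B : Type) [Ring B] [HopfAlgebra ℂ B]
    (hfg : Algebra.FiniteType ℂ B) (hcss : IsCosemisimple ℂ B)
    (S : ℕ → ℤ → Comod ℂ B)
    (hsimple : ∀ n m, (S n m).IsSimple)
    (hcomplete : ∀ M : Comod ℂ B, M.IsSimple → ∃ n m, Comod.Iso M (S n m))
    (hdistinct : ∀ n m n' m', Comod.Iso (S n m) (S n' m') → n = n' ∧ m = m')
    (hunit : Comod.Iso (S 0 0) (Comod.unit ℂ B))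
    (hdet : ∀ m m', Comod.Iso ((S 0 m).tensor (S 0 m')) (S 0 (m + m')))
    (hfus0 : ∀ m, Comod.Iso ((S 1 0).tensor (S 0 m)) (S 1 m))
    (hfus : ∀ n m, Comod.Iso ((S 1 0).tensor (S (n + 1) m))
        ((S (n + 2) m).dsum (S n (m + 1))))
    (hfund : Module.finrank ℂ (S 1 0).X = d) :
    GKdim ℂ B = ⊤ :=
  stmt12_general S hsimple hunit hdet hfus0 hfus (hfund ▸ hd)
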